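/- Let X be a normed space and α ∈ (0,1). For any two points x, y in the open unit ball B(0,1) of X there exists a rectifiable curve γ ⊆ B(0,1) joining x and y such that ∫_γ d(z)^{α−1} |dz| ≤ (π/(α·2^α))·‖x−y‖^α, where d(z) = 1 − ‖z‖ is the distance to the boundary. -/

import Mathlib

open Set Filter Metric ENNReal NNReal

/-- `D* f x`: upper dilation of `f` at `x` (0 at isolated points). -/
noncomputable def Dstar {X Y : Type*} [MetricSpace X] [MetricSpace Y] (f : X → Y) (x : X) :
    ℝ≥0∞ :=
  Filter.limsup (fun y => edist (f x) (f y) / edist x y) (nhdsWithin x {x}ᶜ)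

/-- A curve parametrized on `[0,1]` joining `x` to `y`. -/
def IsCurveFrom {X : Type*} [MetricSpace X] (γ : ℝ → X) (x y : X) : Prop :=
  ContinuousOn γ (Set.Icc 0 1) ∧ γ 0 = x ∧ γ 1 = y

/-- Rectifiability of a curve parametrized on `[0,1]`. -/
def RectifiableCurve {X : Type*} [MetricSpace X] (γ : ℝ → X) : Prop :=
  eVariationOn γ (Set.Icc 0 1) ≠ ⊤

/-- `I` is the curve integral of `g` along `γ : [0,1] → X` (limit of Riemann sums with respect
to arclength). -/
def IsCurveIntegral {X : Type*} [MetricSpace X] (γ : ℝ → X) (g : X → ℝ) (I : ℝ) : Prop :=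
  ∀ ε > 0, ∃ δ > 0, ∀ n : ℕ, ∀ t s : ℕ → ℝ,
    0 < n → t 0 = 0 → t n = 1 →
    (∀ i < n, t i < t (i + 1)) →
    (∀ i < n, t (i + 1) - t i < δ) →
    (∀ i < n, s i ∈ Set.Icc (t i) (t (i + 1))) →
    |I - ∑ i ∈ Finset.range n,
        g (γ (s i)) * (eVariationOn γ (Set.Icc (t i) (t (i + 1)))).toReal| < ε

/-- The weighted distance `d_w`. -/
noncomputable def wDist {X : Type*} [MetricSpace X] (w : X → ℝ) (x y : X) : ℝ :=
  sInf {I | ∃ γ : ℝ → X, IsCurveFrom γ x y ∧ RectifiableCurve γ ∧ IsCurveIntegral γ w I}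

/-- The inner (length) distance `d₁`. -/
noncomputable def innerDist {Y : Type*} [MetricSpace Y] (u v : Y) : ℝ :=
  sInf {L | ∃ δ : ℝ → Y, IsCurveFrom δ u v ∧ eVariationOn δ (Set.Icc 0 1) = ENNReal.ofReal L}

/-- The class `RO^K_w(X,Y)` of regularly oscillating mappings. -/
def RegOsc {X Y : Type*} [MetricSpace X] [MetricSpace Y] (w : X → ℝ) (K : ℝ) (f : X → Y) :
    Prop :=
  (∀ x, Dstar f x ≠ ⊤) ∧
  (∀ x : X, ∀ r : ℝ, 0 < r → r < w x → Bornology.IsBounded (f '' Metric.ball x r)) ∧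
  (∀ x : X, ∀ r : ℝ, 0 < r → r < w x →
    Dstar f x ≤ ENNReal.ofReal ((K / r) * ⨆ y : Metric.ball x r, dist (f x) (f y)))


/-- `v` is a speed function of `γ` on `[a,b]`. -/
def SpeedOn {X : Type*} [MetricSpace X] (γ : ℝ → X) (v : ℝ → ℝ) (a b : ℝ) : Prop :=
  ∀ s t, a ≤ s → s ≤ t → t ≤ b →
    eVariationOn γ (Set.Icc s t) = ENNReal.ofReal (∫ u in s..t, v u)

lemma speedOn_piece {X : Type*} [MetricSpace X] (γ : ℝ → X) (v : ℝ → ℝ) (a b K : ℝ)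
    (hK : 0 ≤ K) (hγ : ∀ s t, a ≤ s → s ≤ t → t ≤ b → dist (γ s) (γ t) = K * (t - s))
    (hv : ∀ u ∈ Set.Ioo a b, v u = K) : SpeedOn γ v a b := by
  intro s t has hst htb
  have hintg : ∫ u in s..t, v u = K * (t - s) := by
    have : ∫ u in s..t, v u = ∫ u in s..t, K := by
      rw [intervalIntegral.integral_of_le hst, intervalIntegral.integral_of_le hst,
        MeasureTheory.integral_Ioc_eq_integral_Ioo, MeasureTheory.integral_Ioc_eq_integral_Ioo]
      apply MeasureTheory.setIntegral_congr_fun measurableSet_Ioo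
      intro u hu
      exact hv u ⟨by linarith [hu.1], by linarith [hu.2]⟩
    rw [this]; simp; ring
  rw [hintg]
  apply le_antisymm
  · have hL : LipschitzOnWith (K.toNNReal) γ (Set.Icc s t) := by
      apply LipschitzOnWith.of_dist_le_mul
      intro p hp q hq
      rw [Real.coe_toNNReal K hK]
      rcases le_total p q with h | h
      · rw [hγ p q (by linarith [hp.1]) h (by linarith [hq.2]), Real.dist_eq,
          abs_sub_comm, abs_of_nonneg (by linarith)]
      · rw [dist_comm, hγ q p (by linarith [hq.1]) h (by linarith [hp.2]), Real.dist_eq,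
          abs_of_nonneg (by linarith)]
    have h1 := hL.comp_eVariationOn_le (f := γ) (g := (id : ℝ → ℝ)) (s := Set.Icc s t)
      (fun x hx => hx)
    have h2 : eVariationOn (id : ℝ → ℝ) (Set.Icc s t) ≤ ENNReal.ofReal (t - s) := by
      have := (monotone_id.monotoneOn (Set.Icc s t)).eVariationOn_le
        (Set.left_mem_Icc.2 hst) (Set.right_mem_Icc.2 hst)
      simpa using this
    calc eVariationOn γ (Set.Icc s t) ≤ _ := h1
      _ ≤ ENNReal.ofReal K * ENNReal.ofReal (t - s) := by gcongr; exact le_rfl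
      _ = _ := (ENNReal.ofReal_mul hK).symm
  · rw [← hγ s t has hst htb, ← edist_dist]
    exact eVariationOn.edist_le _ (Set.left_mem_Icc.2 hst) (Set.right_mem_Icc.2 hst)

lemma speedOn_concat {X : Type*} [MetricSpace X] (γ : ℝ → X) (v : ℝ → ℝ) (a b c : ℝ)
    (hv : ∀ p q, IntervalIntegrable v MeasureTheory.volume p q) (hv0 : ∀ t, 0 ≤ v t)
    (h1 : SpeedOn γ v a b) (h2 : SpeedOn γ v b c) : SpeedOn γ v a c := by
  intro s t has hst htc
  rcases le_total t b with h | h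
  · exact h1 s t has hst h
  rcases le_total b s with h' | h'
  · exact h2 s t h' hst htc
  have := eVariationOn.Icc_add_Icc γ (s := Set.univ) h' h (Set.mem_univ _)
  simp only [Set.univ_inter] at this
  rw [← this, h1 s b has h' le_rfl, h2 b t le_rfl h htc,
    ← intervalIntegral.integral_add_adjacent_intervals (hv s b) (hv b t), ENNReal.ofReal_add]
  · exact intervalIntegral.integral_nonneg h' fun _ _ => hv0 _
  · exact intervalIntegral.integral_nonneg h fun _ _ => hv0 _

lemma isCurveIntegral_of_speed {X : Type*} [MetricSpace X] (γ : ℝ → X) (v : ℝ → ℝ) (g : X → ℝ)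
    (hv : ∀ p q, IntervalIntegrable v MeasureTheory.volume p q) (hv0 : ∀ t, 0 ≤ v t)
    (h : SpeedOn γ v 0 1) (hg : ContinuousOn (fun t => g (γ t)) (Set.Icc 0 1)) :
    IsCurveIntegral γ g (∫ t in (0:ℝ)..1, g (γ t) * v t) := by
  intro ε hε
  set L := ∫ t in (0:ℝ)..1, v t with hL
  have hL0 : 0 ≤ L := intervalIntegral.integral_nonneg zero_le_one fun _ _ => hv0 _
  have huc := isCompact_Icc.uniformContinuousOn_of_continuous hg
  rw [Metric.uniformContinuousOn_iff] at huc
  obtain ⟨δ, hδ, hδ'⟩ := huc (ε / (L + 1)) (by positivity)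
  refine ⟨δ, hδ, ?_⟩
  intro n t s hn ht0 htn hlt hd hs
  have hmono : ∀ i j, i ≤ j → j ≤ n → t i ≤ t j := by
    intro i j hij
    induction j, hij using Nat.le_induction with
    | base => intro _; exact le_rfl
    | succ k hk ih => intro hkn; exact (ih (by omega)).trans (hlt k (by omega)).le
  have h0 : ∀ i ≤ n, 0 ≤ t i := fun i hi => ht0 ▸ hmono 0 i (Nat.zero_le _) hi
  have h1 : ∀ i ≤ n, t i ≤ 1 := fun i hi => htn ▸ hmono i n hi le_rfl
  have hgv : ∀ p q, 0 ≤ p → p ≤ q → q ≤ 1 →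
      IntervalIntegrable (fun u => g (γ u) * v u) MeasureTheory.volume p q := by
    intro p q hp hpq hq
    apply (hv p q).continuousOn_mul
    rw [Set.uIcc_of_le hpq]
    exact hg.mono (Set.Icc_subset_Icc hp hq)
  have hI : ∫ u in (0:ℝ)..1, g (γ u) * v u
      = ∑ i ∈ Finset.range n, ∫ u in (t i)..(t (i+1)), g (γ u) * v u := by
    rw [intervalIntegral.sum_integral_adjacent_intervals, ht0, htn]
    intro k hk
    exact hgv _ _ (h0 k hk.le) (hlt k hk).le (h1 (k+1) hk)
  have hLs : L = ∑ i ∈ Finset.range n, ∫ u in (t i)..(t (i+1)), v u := by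
    rw [intervalIntegral.sum_integral_adjacent_intervals, ht0, htn]
    intro k hk
    exact hv _ _
  rw [hI, ← Finset.sum_sub_distrib]
  have hbound : ∀ i ∈ Finset.range n,
      |(∫ u in (t i)..(t (i+1)), g (γ u) * v u)
        - g (γ (s i)) * (eVariationOn γ (Set.Icc (t i) (t (i + 1)))).toReal|
      ≤ ε / (L + 1) * ∫ u in (t i)..(t (i+1)), v u := by
    intro i hi
    rw [Finset.mem_range] at hi
    have hle := (hlt i hi).le
    rw [h _ _ (h0 i hi.le) hle (h1 (i+1) hi), ENNReal.toReal_ofReal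
      (intervalIntegral.integral_nonneg hle fun _ _ => hv0 _),
      ← intervalIntegral.integral_const_mul, ← intervalIntegral.integral_const_mul,
      ← intervalIntegral.integral_sub (hgv _ _ (h0 i hi.le) hle (h1 (i+1) hi))
        ((hv _ _).const_mul _), ← Real.norm_eq_abs]
    apply intervalIntegral.norm_integral_le_of_norm_le hle _ ((hv _ _).const_mul _)
    filter_upwards with u hu
    rw [← sub_mul, norm_mul, Real.norm_eq_abs (v u), abs_of_nonneg (hv0 u)]
    apply mul_le_mul_of_nonneg_right _ (hv0 u)
    have hsi := hs i hi
    have hdi := hd i hi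
    have a0 := h0 i hi.le
    have a1 := h1 (i+1) hi
    have := hδ' u ⟨by linarith [hu.1], by linarith [hu.2]⟩ (s i)
      ⟨by linarith [hsi.1], by linarith [hsi.2]⟩ (by
        rw [Real.dist_eq, abs_lt]
        constructor <;> linarith [hu.1, hu.2, hsi.1, hsi.2])
    rw [← dist_eq_norm]
    exact this.le
  calc _ ≤ _ := Finset.abs_sum_le_sum_abs _ _
    _ ≤ _ := Finset.sum_le_sum hbound
    _ = ε / (L+1) * L := by rw [← Finset.mul_sum, ← hLs]
    _ < ε := by
      rw [div_mul_eq_mul_div, div_lt_iff₀ (by positivity)]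
      nlinarith

lemma num_bound (u : ℝ) (hu : 0 < u) : 2 * u ^ (-u) ≤ Real.pi := by
  have h1 : -u * Real.log u ≤ 2/5 := by
    have ha : Real.log (1 / (5/2 * u)) ≤ 1 / (5/2 * u) - 1 :=
      Real.log_le_sub_one_of_pos (by positivity)
    rw [one_div, Real.log_inv, Real.log_mul (by norm_num) hu.ne'] at ha
    have hb : Real.log (5/2) ≤ 1 := by
      rw [Real.log_le_iff_le_exp (by norm_num)]
      linarith [Real.exp_one_gt_d9]
    have hc : u * (5/2*u)⁻¹ = 2/5 := by field_simp
    have := mul_le_mul_of_nonneg_left ha hu.le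
    nlinarith
  have h2 : u ^ (-u) ≤ Real.exp (2/5) := by
    rw [Real.rpow_def_of_pos hu, Real.exp_le_exp]; linarith
  have h3 : Real.exp (2/5) ≤ 1.57 := by
    have : Real.exp (2/5) ^ 5 ≤ 1.57 ^ 5 := by
      rw [← Real.exp_nat_mul]
      have : ((5:ℕ):ℝ) * (2/5) = 1 + 1 := by norm_num
      rw [this, Real.exp_add]
      nlinarith [Real.exp_one_lt_d9, Real.exp_one_gt_d9]
    exact le_of_pow_le_pow_left₀ (by norm_num) (by norm_num) this
  linarith [Real.pi_gt_d2]

lemma final_bound (α r : ℝ) (hα : α ∈ Set.Ioo (0:ℝ) 1) (hr : 0 < r) :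
    (r * (1 - α)) ^ α / α + 2 * r * (r * (1 - α)) ^ (α - 1) + (r * (1 - α)) ^ α / α
      ≤ (Real.pi / (α * 2 ^ α)) * (2 * r) ^ α := by
  obtain ⟨h0, h1⟩ := hα
  have hu : 0 < 1 - α := by linarith
  have hb := num_bound (1 - α) hu
  rw [neg_sub] at hb
  have e1 : (1 - α) ^ α = (1 - α) ^ (α - 1) * (1 - α) := by
    rw [← Real.rpow_add_one hu.ne']; simp
  have e2 : r * r ^ (α - 1) = r ^ α := by
    rw [mul_comm, ← Real.rpow_add_one hr.ne']; simp
  rw [Real.mul_rpow hr.le hu.le, Real.mul_rpow hr.le hu.le, Real.mul_rpow (by norm_num) hr.le,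
    e1]
  have hp : 0 < r ^ α := by positivity
  have e3 : 2 * r * (r ^ (α - 1) * (1 - α) ^ (α - 1)) = 2 * r ^ α * (1 - α) ^ (α - 1) := by
    rw [← e2]; ring
  rw [e3]
  have h2 : (0:ℝ) < 2 ^ α := by positivity
  have e4 : Real.pi / (α * 2 ^ α) * (2 ^ α * r ^ α) = r ^ α / α * Real.pi := by
    field_simp
  rw [e4]
  calc _ = r ^ α / α * (2 * (1 - α) ^ (α - 1)) := by field_simp; ring
    _ ≤ _ := by gcongr

lemma radial_bound (α h m : ℝ) (hα : α ∈ Set.Ioo (0:ℝ) 1) (hh : 0 < h) (hh1 : h < 1)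
    (hm0 : 0 ≤ m) (hm : m < 1) :
    ∫ t in (0:ℝ)..1/3, (1 - (1 - 3 * h * t) * m) ^ (α - 1) * (3 * h * m) ≤ h ^ α / α := by
  obtain ⟨h0, h1⟩ := hα
  have hpos : ∀ t ∈ Set.Icc (0:ℝ) (1/3), 0 < 1 - (1 - 3 * h * t) * m := by
    intro t ht
    have : 0 ≤ 3 * h * t := by have := ht.1; positivity
    nlinarith
  have hintg : ∫ t in (0:ℝ)..1/3, t ^ (α - 1) * ((3 * h) ^ (α - 1) * (3 * h)) = h ^ α / α := by
    rw [intervalIntegral.integral_mul_const, integral_rpow (Or.inl (by linarith)),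
      ← Real.rpow_add_one (by positivity)]
    simp only [sub_add_cancel]
    rw [Real.zero_rpow h0.ne', sub_zero, div_mul_eq_mul_div,
      ← Real.mul_rpow (by norm_num) (by positivity)]
    congr 2; ring
  rw [← hintg]
  apply intervalIntegral.integral_mono_on_of_le_Ioo (by norm_num)
  · apply ContinuousOn.intervalIntegrable
    rw [Set.uIcc_of_le (by norm_num)]
    apply ContinuousOn.mul _ continuousOn_const
    apply ContinuousOn.rpow_const (by fun_prop)
    intro t ht
    exact Or.inl (hpos t ht).ne'
  · exact (intervalIntegral.intervalIntegrable_rpow' (by linarith)).mul_const _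
  · intro t ht
    have ht0 := ht.1
    have ht1 : t < 1/3 := ht.2
    rw [← mul_assoc (t ^ (α - 1)), ← Real.mul_rpow ht0.le (by positivity)]
    have hz : 0 < 3 * h * t := by positivity
    have hz1 : 3 * h * t < 1 := by nlinarith
    have hA : (1 - (1 - 3 * h * t) * m) ^ (α - 1) ≤ (t * (3 * h)) ^ (α - 1) := by
      apply Real.rpow_le_rpow_of_nonpos (by positivity) _ (by linarith)
      nlinarith
    have hB : 3 * h * m ≤ 3 * h := by nlinarith
    gcongr

/-- The curve: radially inwards, across, radially outwards. -/
noncomputable def uCurve {X : Type*} [NormedAddCommGroup X] [NormedSpace ℝ X]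
    (h : ℝ) (x y : X) (t : ℝ) : X :=
  if t ≤ 1/3 then (1 - 3 * h * t) • x
  else if t ≤ 2/3 then (1 - h) • ((2 - 3 * t) • x + (3 * t - 1) • y)
  else (1 - 3 * h * (1 - t)) • y

/-- Its speed. -/
noncomputable def uSpeed {X : Type*} [NormedAddCommGroup X] [NormedSpace ℝ X]
    (h : ℝ) (x y : X) (t : ℝ) : ℝ :=
  if t ≤ 1/3 then 3 * h * ‖x‖
  else if t < 2/3 then 3 * (1 - h) * ‖x - y‖
  else 3 * h * ‖y‖

section
variable {X : Type*} [NormedAddCommGroup X] [NormedSpace ℝ X] (h : ℝ) (x y : X)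

lemma uCurve_1 (t : ℝ) (ht : t ≤ 1/3) : uCurve h x y t = (1 - 3 * h * t) • x := by
  simp only [uCurve, if_pos ht]

lemma uCurve_2 (t : ℝ) (ht : 1/3 ≤ t) (ht' : t ≤ 2/3) :
    uCurve h x y t = (1 - h) • ((2 - 3 * t) • x + (3 * t - 1) • y) := by
  rcases ht.eq_or_lt with rfl | ht
  · rw [uCurve_1 _ _ _ _ le_rfl]; norm_num
    congr 1; ring
  · simp only [uCurve, if_neg (not_le.2 ht), if_pos ht']

lemma uCurve_3 (t : ℝ) (ht : 2/3 ≤ t) : uCurve h x y t = (1 - 3 * h * (1 - t)) • y := by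
  rcases ht.eq_or_lt with rfl | ht
  · rw [uCurve_2 _ _ _ _ (by norm_num) le_rfl]; norm_num
    congr 1; ring
  · have : ¬ t ≤ 1/3 := by linarith
    simp only [uCurve, if_neg (not_le.2 ht), if_neg this]

lemma uCurve_continuous : Continuous (uCurve h x y) := by
  unfold uCurve
  apply Continuous.if_le (by fun_prop) _ continuous_id continuous_const
  · intro t ht
    simp only [id] at ht
    subst ht
    norm_num
    congr 1; ring
  · apply Continuous.if_le (by fun_prop) (by fun_prop) continuous_id continuous_const
    intro t ht
    simp only [id] at ht
    subst ht
    norm_num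
    congr 1; ring

lemma uSpeed_nonneg (h0 : 0 ≤ h) (h1 : h ≤ 1) (t : ℝ) : 0 ≤ uSpeed h x y t := by
  have : 0 ≤ 1 - h := by linarith
  unfold uSpeed; split_ifs <;> positivity

lemma uSpeed_int (p q : ℝ) :
    IntervalIntegrable (uSpeed h x y) MeasureTheory.volume p q := by
  have hm : Measurable (uSpeed h x y) := by
    unfold uSpeed
    exact Measurable.ite measurableSet_Iic measurable_const
      (Measurable.ite measurableSet_Iio measurable_const measurable_const)
  rw [intervalIntegrable_iff]
  apply MeasureTheory.IntegrableOn.of_bound (C := |3 * h * ‖x‖| + |3 * (1 - h) * ‖x - y‖| + |3 * h * ‖y‖|) (by simp)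
    hm.aestronglyMeasurable
  filter_upwards with t
  have a1 := abs_nonneg (3 * h * ‖x‖)
  have a2 := abs_nonneg (3 * (1 - h) * ‖x - y‖)
  have a3 := abs_nonneg (3 * h * ‖y‖)
  unfold uSpeed
  rw [Real.norm_eq_abs]
  split_ifs <;> linarith

lemma uSpeed_2 (t : ℝ) (ht : t ∈ Set.Ioo (1/3:ℝ) (2/3)) :
    uSpeed h x y t = 3 * (1 - h) * ‖x - y‖ := by
  simp only [uSpeed, if_neg (not_le.2 ht.1), if_pos ht.2]

lemma uSpeed_3 (t : ℝ) (ht : 2/3 ≤ t) :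
    uSpeed h x y t = 3 * h * ‖y‖ := by
  have : ¬ t ≤ 1/3 := by linarith
  simp only [uSpeed, if_neg (not_lt.2 ht), if_neg this]

lemma uCurve_speed (h0 : 0 ≤ h) (h1 : h ≤ 1) : SpeedOn (uCurve h x y) (uSpeed h x y) 0 1 := by
  have hh : 0 ≤ 1 - h := by linarith
  have hi := uSpeed_int h x y
  have hn := uSpeed_nonneg h x y h0 h1
  apply speedOn_concat _ _ 0 (1/3) 1 hi hn
  · apply speedOn_piece _ _ _ _ (3 * h * ‖x‖) (by positivity)
    · intro s t hs hst ht
      rw [uCurve_1 _ _ _ s (by linarith), uCurve_1 _ _ _ t ht, dist_eq_norm, ← sub_smul, norm_smul,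
        Real.norm_eq_abs]
      have : 1 - 3 * h * s - (1 - 3 * h * t) = 3 * h * (t - s) := by ring
      rw [this, abs_of_nonneg (mul_nonneg (by positivity) (by linarith))]
      ring
    · intro u hu
      simp only [uSpeed, if_pos hu.2.le]
  apply speedOn_concat _ _ (1/3) (2/3) 1 hi hn
  · apply speedOn_piece _ _ _ _ (3 * (1 - h) * ‖x - y‖) (by positivity)
    · intro s t hs hst ht
      rw [uCurve_2 _ _ _ s (by linarith) (by linarith), uCurve_2 _ _ _ t (by linarith) ht,
        dist_eq_norm]
      have : (1 - h) • ((2 - 3 * s) • x + (3 * s - 1) • y)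
          - (1 - h) • ((2 - 3 * t) • x + (3 * t - 1) • y)
          = (3 * (1 - h) * (t - s)) • (x - y) := by module
      rw [this, norm_smul, Real.norm_eq_abs,
        abs_of_nonneg (mul_nonneg (by positivity) (by linarith))]
      ring
    · exact uSpeed_2 h x y
  · apply speedOn_piece _ _ _ _ (3 * h * ‖y‖) (by positivity)
    · intro s t hs hst ht
      rw [uCurve_3 _ _ _ s (by linarith), uCurve_3 _ _ _ t (by linarith), dist_comm, dist_eq_norm,
        ← sub_smul, norm_smul, Real.norm_eq_abs]
      have : 1 - 3 * h * (1 - t) - (1 - 3 * h * (1 - s)) = 3 * h * (t - s) := by ring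
      rw [this, abs_of_nonneg (mul_nonneg (by positivity) (by linarith))]
      ring
    · intro u hu
      exact uSpeed_3 h x y u hu.1.le

lemma uCurve_norm_2 (h1 : h < 1) (hx : ‖x‖ < 1) (hy : ‖y‖ < 1)
    (t : ℝ) (ht : 1/3 ≤ t) (ht' : t ≤ 2/3) : ‖uCurve h x y t‖ < 1 - h := by
  rw [uCurve_2 _ _ _ t ht ht', norm_smul, Real.norm_eq_abs, abs_of_pos (by linarith)]
  have : ‖(2 - 3 * t) • x + (3 * t - 1) • y‖ < 1 := by
    have hc := (convex_ball (0:X) 1) (x := x) (by simpa using hx) (y := y) (by simpa using hy)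
      (show 0 ≤ 2 - 3 * t by linarith) (show 0 ≤ 3 * t - 1 by linarith) (by ring)
    simpa using hc
  nlinarith

lemma uCurve_norm_1 (h0 : 0 ≤ h) (h1 : h < 1)
    (t : ℝ) (ht : 0 ≤ t) (ht' : t ≤ 1/3) : ‖uCurve h x y t‖ = (1 - 3 * h * t) * ‖x‖ := by
  rw [uCurve_1 _ _ _ t ht', norm_smul, Real.norm_eq_abs, abs_of_nonneg]
  nlinarith

lemma uCurve_norm_3 (h0 : 0 ≤ h) (h1 : h < 1)
    (t : ℝ) (ht : 2/3 ≤ t) (ht' : t ≤ 1) : ‖uCurve h x y t‖ = (1 - 3 * h * (1 - t)) * ‖y‖ := by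
  rw [uCurve_3 _ _ _ t ht, norm_smul, Real.norm_eq_abs, abs_of_nonneg]
  nlinarith

lemma uCurve_mem (h0 : 0 ≤ h) (h1 : h < 1) (hx : ‖x‖ < 1) (hy : ‖y‖ < 1)
    (t : ℝ) (ht : t ∈ Set.Icc (0:ℝ) 1) : ‖uCurve h x y t‖ < 1 := by
  rcases le_total t (1/3) with h' | h'
  · rw [uCurve_norm_1 h x y h0 h1 t ht.1 h']
    have : 0 ≤ 3 * h * t := by have := ht.1; positivity
    nlinarith [norm_nonneg x]
  rcases le_total t (2/3) with h'' | h''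
  · linarith [uCurve_norm_2 h x y h1 hx hy t h' h'']
  · rw [uCurve_norm_3 h x y h0 h1 t h'' ht.2]
    have : 0 ≤ 3 * h * (1 - t) := mul_nonneg (by positivity) (by linarith [ht.2])
    nlinarith [norm_nonneg y]

end

theorem unit_ball_curve_condition {X : Type*} [NormedAddCommGroup X] [NormedSpace ℝ X]
    (α : ℝ) (hα : α ∈ Set.Ioo (0:ℝ) 1)
    (x y : X) (hx : x ∈ Metric.ball (0:X) 1) (hy : y ∈ Metric.ball (0:X) 1) :
    ∃ γ : ℝ → X, ∃ I : ℝ, IsCurveFrom γ x y ∧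
      (∀ t ∈ Set.Icc (0:ℝ) 1, γ t ∈ Metric.ball (0:X) 1) ∧
      RectifiableCurve γ ∧
      IsCurveIntegral γ (fun z => (1 - ‖z‖) ^ (α - 1)) I ∧
      I ≤ (Real.pi / (α * 2 ^ α)) * ‖x - y‖ ^ α := by
  have hx' : ‖x‖ < 1 := by simpa using hx
  have hy' : ‖y‖ < 1 := by simpa using hy
  obtain ⟨r, hr⟩ : ∃ r, ‖x - y‖ = 2 * r := ⟨‖x - y‖ / 2, by ring⟩
  have hr0 : 0 ≤ r := by linarith [norm_nonneg (x - y)]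
  have hr1 : r < 1 := by linarith [norm_sub_le x y]
  have hα0 := hα.1
  have hα1 := hα.2
  obtain ⟨h, hh⟩ : ∃ h, h = r * (1 - α) := ⟨_, rfl⟩
  have h0 : 0 ≤ h := hh ▸ mul_nonneg hr0 (by linarith)
  have h1 : h < 1 := by nlinarith
  have hi := uSpeed_int h x y
  have hn := uSpeed_nonneg h x y h0 h1.le
  have hsp := uCurve_speed h x y h0 h1.le
  have hmem := uCurve_mem h x y h0 h1 hx' hy'
  have hcont : ContinuousOn (fun t => (1 - ‖uCurve h x y t‖) ^ (α - 1)) (Set.Icc 0 1) := by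
    apply ContinuousOn.rpow_const
    · exact (continuous_const.sub (uCurve_continuous h x y).norm).continuousOn
    · intro t ht
      left
      linarith [hmem t ht]
  refine ⟨uCurve h x y, _, ⟨(uCurve_continuous h x y).continuousOn, ?_, ?_⟩, ?_, ?_,
    isCurveIntegral_of_speed _ (uSpeed h x y) (fun z => (1 - ‖z‖) ^ (α - 1)) hi hn hsp hcont, ?_⟩
  · rw [uCurve_1 _ _ _ _ (by norm_num)]; simp
  · rw [uCurve_3 _ _ _ _ (by norm_num)]; simp
  · intro t ht
    simpa using hmem t ht
  · rw [RectifiableCurve, hsp 0 1 le_rfl zero_le_one le_rfl]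
    exact ENNReal.ofReal_ne_top
  rcases hr0.eq_or_lt with hr00 | hrpos
  · have hxy : ‖x - y‖ = 0 := by rw [hr, ← hr00]; ring
    have hz : h = 0 := by rw [hh, ← hr00]; ring
    have : ∀ t, uSpeed h x y t = 0 := by
      intro t
      simp [uSpeed, hz, hxy]
    simp only [this, hxy, Real.zero_rpow hα0.ne']
    simp
  have hpos : 0 < h := hh ▸ mul_pos hrpos (by linarith)
  have hgv : ∀ p q, 0 ≤ p → p ≤ q → q ≤ 1 →
      IntervalIntegrable (fun u => (1 - ‖uCurve h x y u‖) ^ (α - 1) * uSpeed h x y u)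
        MeasureTheory.volume p q := by
    intro p q hp hpq hq
    apply (hi p q).continuousOn_mul
    rw [Set.uIcc_of_le hpq]
    exact hcont.mono (Set.Icc_subset_Icc hp hq)
  have i1 := hgv 0 (1/3) (by norm_num) (by norm_num) (by norm_num)
  have i2 := hgv (1/3) (2/3) (by norm_num) (by norm_num) (by norm_num)
  have i3 := hgv (2/3) 1 (by norm_num) (by norm_num) (by norm_num)
  rw [← intervalIntegral.integral_add_adjacent_intervals (i1.trans i2) i3,
    ← intervalIntegral.integral_add_adjacent_intervals i1 i2, hr]
  refine le_trans ?_ (final_bound α r hα hrpos)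
  rw [← hh]
  have b1 : ∫ u in (0:ℝ)..1/3, (1 - ‖uCurve h x y u‖) ^ (α - 1) * uSpeed h x y u
      ≤ h ^ α / α := by
    refine le_trans (le_of_eq ?_) (radial_bound α h ‖x‖ hα hpos h1 (norm_nonneg x) hx')
    apply intervalIntegral.integral_congr
    intro t ht
    rw [Set.uIcc_of_le (by norm_num)] at ht
    simp only [uCurve_norm_1 h x y h0 h1 t ht.1 ht.2]
    simp only [uSpeed, if_pos ht.2]
  have b3 : ∫ u in (2/3:ℝ)..1, (1 - ‖uCurve h x y u‖) ^ (α - 1) * uSpeed h x y u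
      ≤ h ^ α / α := by
    refine le_trans (le_of_eq ?_) (radial_bound α h ‖y‖ hα hpos h1 (norm_nonneg y) hy')
    have hs := intervalIntegral.integral_comp_sub_left (a := 2/3) (b := 1)
      (fun t => (1 - (1 - 3 * h * t) * ‖y‖) ^ (α - 1) * (3 * h * ‖y‖)) (1:ℝ)
    have e : (1:ℝ) - 2/3 = 1/3 := by norm_num
    rw [sub_self, e] at hs
    rw [← hs]
    apply intervalIntegral.integral_congr
    intro t ht
    rw [Set.uIcc_of_le (by norm_num)] at ht
    simp only [uCurve_norm_3 h x y h0 h1 t ht.1 ht.2, uSpeed_3 h x y t ht.1]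
  have b2 : ∫ u in (1/3:ℝ)..2/3, (1 - ‖uCurve h x y u‖) ^ (α - 1) * uSpeed h x y u
      ≤ 2 * r * h ^ (α - 1) := by
    have hc : ∫ u in (1/3:ℝ)..2/3, h ^ (α - 1) * (3 * (2 * r)) = 2 * r * h ^ (α - 1) := by
      rw [intervalIntegral.integral_const, smul_eq_mul]; ring
    rw [← hc]
    apply intervalIntegral.integral_mono_on_of_le_Ioo (by norm_num) i2 (by simp)
    intro t ht
    rw [uSpeed_2 h x y t ht, hr]
    have hN := uCurve_norm_2 h x y h1 hx' hy' t ht.1.le ht.2.le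
    have hA : (1 - ‖uCurve h x y t‖) ^ (α - 1) ≤ h ^ (α - 1) :=
      Real.rpow_le_rpow_of_nonpos hpos (by linarith) (by linarith)
    have hB : 3 * (1 - h) * (2 * r) ≤ 3 * (2 * r) := by nlinarith
    have hC : 0 ≤ 3 * (1 - h) * (2 * r) := mul_nonneg (by linarith) (by linarith)
    exact mul_le_mul hA hB hC (by positivity)
  linarith
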